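/- For n a positive integer and q not a root of unity, the n-dimensional representation R_n^{(i,+)} of U_q(so_3) given on basis |1⟩,…,|n⟩ by R(I1)|k⟩ = −((q^{k−1/2} + q^{−k+1/2})/(q − q^{-1}))|k⟩, R(I2)|1⟩ = ([n]/(q^{1/2} − q^{-1/2}))|1⟩ + i([n−1]/(q^{1/2} − q^{-1/2}))|2⟩, and R(I2)|k⟩ = i([n−k]/(q^{k−1/2} − q^{−k+1/2}))|k+1⟩ + i([n+k−1]/(q^{k−1/2} − q^{−k+1/2}))|k−1⟩ for k ≠ 1, satisfies the defining relations of U_q(so_3) (relations (7) and (8): R(I1)R(I2)² − (q+q⁻¹)R(I2)R(I1)R(I2) + R(I2)²R(I1) = −R(I1) and symmetrically). -/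

import Mathlib

noncomputable section

/-- Basis vector of `Fin n → ℂ` indexed by an integer `k ∈ {1, …, n}`;
`0` when out of range (convention `|0⟩ = |n+1⟩ = 0`). -/
def e (n : ℕ) (k : ℤ) : Fin n → ℂ := fun j => if (j : ℤ) + 1 = k then 1 else 0

/-- `br q s (2a)` is the `q`-number `[a]` for the half-integer `a`, where `s = q^{1/2}`. -/
def br (q s : ℂ) (t : ℤ) : ℂ := (s ^ t - s ^ (-t)) / (q - q⁻¹)


/-- Extended family of vectors: reflection of the basis through `k ↦ 1 - k`. -/
def fv (n : ℕ) (k : ℤ) : Fin n → ℂ :=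
  if 1 ≤ k then e n k else if k = 0 then (-Complex.I) • e n 1 else Complex.I • e n 2

lemma fv_pos (n : ℕ) (k : ℤ) (h : 1 ≤ k) : fv n k = e n k := by simp [fv, h]

lemma fv_zero (n : ℕ) : fv n 0 = (-Complex.I) • e n 1 := by simp [fv]

lemma fv_neg (n : ℕ) : fv n (-1) = Complex.I • e n 2 := by simp [fv]

lemma e_big (n : ℕ) (k : ℤ) (h : (n : ℤ) < k) : e n k = 0 := by
  funext j
  have := j.2
  simp only [e, Pi.zero_apply, ite_eq_right_iff, one_ne_zero, imp_false]
  omega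

def lam (q s : ℂ) (k : ℤ) : ℂ := -((s ^ (2 * k - 1) + s ^ (1 - 2 * k)) / (q - q⁻¹))
def ca (q s : ℂ) (n : ℕ) (k : ℤ) : ℂ :=
  Complex.I * br q s (2 * (n - k)) / (s ^ (2 * k - 1) - s ^ (1 - 2 * k))
def cb (q s : ℂ) (n : ℕ) (k : ℤ) : ℂ :=
  Complex.I * br q s (2 * (n + k - 1)) / (s ^ (2 * k - 1) - s ^ (1 - 2 * k))


lemma lam_eq (s : ℂ) (hs0 : s ≠ 0) (k : ℤ) (x : ℂ) (hx : x = s ^ (2 * k - 1)) :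
    lam (s^2) s k = -((x + x⁻¹) / (s^2 - (s^2)⁻¹)) := by
  rw [lam, hx, ← zpow_neg]; congr 4; ring

lemma x_succ (s : ℂ) (hs0 : s ≠ 0) (k : ℤ) : s ^ (2 * (k + 1) - 1) = s ^ (2 * k - 1) * s ^ 2 := by
  rw [show 2 * (k + 1) - 1 = (2 * k - 1) + 2 by ring, zpow_add₀ hs0]; norm_cast

lemma x_pred (s : ℂ) (hs0 : s ≠ 0) (k : ℤ) : s ^ (2 * (k - 1) - 1) = s ^ (2 * k - 1) / s ^ 2 := by
  rw [show 2 * (k - 1) - 1 = (2 * k - 1) - 2 by ring, zpow_sub₀ hs0]; norm_cast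

lemma ca_eq (s : ℂ) (hs0 : s ≠ 0) (k : ℤ) (n : ℕ) (x N : ℂ) (hx : x = s ^ (2 * k - 1)) (hN : N = s ^ (2 * n)) :
    ca (s^2) s n k = Complex.I * ((N / (x * s) - x * s / N) / (s^2 - (s^2)⁻¹)) / (x - x⁻¹) := by
  have h1 : s ^ (2 * ((n:ℤ) - k)) = N / (x * s) := by
    rw [hx, hN, ← zpow_add_one₀ hs0, ← zpow_natCast, ← zpow_sub₀ hs0]; congr 1; push_cast; ring
  have h2 : s ^ (1 - 2 * k) = x⁻¹ := by
    rw [hx, ← zpow_neg]; congr 1; ring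
  rw [ca, br, zpow_neg, h1, h2, ← hx, inv_div]

lemma cb_eq (s : ℂ) (hs0 : s ≠ 0) (k : ℤ) (n : ℕ) (x N : ℂ) (hx : x = s ^ (2 * k - 1)) (hN : N = s ^ (2 * n)) :
    cb (s^2) s n k = Complex.I * ((N * x / s - s / (N * x)) / (s^2 - (s^2)⁻¹)) / (x - x⁻¹) := by
  have h1 : s ^ (2 * ((n:ℤ) + k - 1)) = N * x / s := by
    rw [hx, hN, ← zpow_natCast, ← zpow_add₀ hs0, div_eq_mul_inv, ← zpow_sub_one₀ hs0]
    congr 1; push_cast; ring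
  have h2 : s ^ (1 - 2 * k) = x⁻¹ := by
    rw [hx, ← zpow_neg]; congr 1; ring
  rw [cb, br, zpow_neg, h1, h2, ← hx, inv_div]


lemma sub_inv_ne (x : ℂ) (hx : x ≠ 0) (h : x ^ 2 ≠ 1) : x - x⁻¹ ≠ 0 := by
  intro h'
  apply h
  field_simp at h'
  linear_combination h'

lemma lam_lin (s x : ℂ) (hs0 : s ≠ 0) (hx : x ≠ 0) (d : ℂ) :
    -((x * s^2 * s^2 + (x * s^2 * s^2)⁻¹) / d) - (s^2 + (s^2)⁻¹) * (-((x * s^2 + (x * s^2)⁻¹) / d))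
      + -((x + x⁻¹) / d) = 0 := by
  field_simp
  ring

lemma lam_quad (s x : ℂ) (hs0 : s ≠ 0) (hx : x ≠ 0) (hd : s^2 - (s^2)⁻¹ ≠ 0) :
    (-((x * s^2 + (x * s^2)⁻¹) / (s^2 - (s^2)⁻¹)))^2
    - (s^2 + (s^2)⁻¹) * (-((x * s^2 + (x * s^2)⁻¹) / (s^2 - (s^2)⁻¹)))
       * (-((x + x⁻¹) / (s^2 - (s^2)⁻¹)))
      + (-((x + x⁻¹) / (s^2 - (s^2)⁻¹)))^2 = -1 := by
  have : s^2 * s^2 - 1 ≠ 0 := by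
    intro h; apply hd; field_simp; linear_combination h
  have : s^4 - 1 ≠ 0 := by
    intro h; apply this; linear_combination h
  field_simp
  ring

lemma main_scal (s x N : ℂ) (hs0 : s ≠ 0) (hx : x ≠ 0) (hN : N ≠ 0)
    (hd : s^4 - 1 ≠ 0) (h0 : x^2 - 1 ≠ 0) (h1 : x^2 * s^4 - 1 ≠ 0) (h2 : x^2 - s^4 ≠ 0) :
    (Complex.I * ((N / (x * s) - x * s / N) / (s^2 - (s^2)⁻¹)) / (x - x⁻¹)) *
    (Complex.I * ((N * (x * s^2) / s - s / (N * (x * s^2))) / (s^2 - (s^2)⁻¹))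
      / (x * s^2 - (x * s^2)⁻¹)) *
    (2 * (-((x + x⁻¹) / (s^2 - (s^2)⁻¹))) -
      (s^2 + (s^2)⁻¹) * (-((x * s^2 + (x * s^2)⁻¹) / (s^2 - (s^2)⁻¹)))) +
    (Complex.I * ((N * x / s - s / (N * x)) / (s^2 - (s^2)⁻¹)) / (x - x⁻¹)) *
    (Complex.I * ((N / (x / s^2 * s) - x / s^2 * s / N) / (s^2 - (s^2)⁻¹))
      / (x / s^2 - (x / s^2)⁻¹)) *
    (2 * (-((x + x⁻¹) / (s^2 - (s^2)⁻¹))) -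
      (s^2 + (s^2)⁻¹) * (-((x / s^2 + (x / s^2)⁻¹) / (s^2 - (s^2)⁻¹))))
    = -(-((x + x⁻¹) / (s^2 - (s^2)⁻¹))) := by
  have e0 : s^2 - (s^2)⁻¹ = (s^4 - 1) / s^2 := by field_simp
  have e1 : x - x⁻¹ = (x^2 - 1) / x := by field_simp
  have e2 : x * s^2 - (x * s^2)⁻¹ = (x^2 * s^4 - 1) / (x * s^2) := by field_simp
  have e3 : x / s^2 - (x / s^2)⁻¹ = (x^2 - s^4) / (x * s^2) := by field_simp
  rw [e0, e1, e2, e3]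
  generalize hA : s^4 - 1 = A at *
  generalize hB : x^2 - 1 = B at *
  generalize hC : x^2 * s^4 - 1 = C at *
  generalize hD : x^2 - s^4 = D at *
  field_simp
  simp only [Complex.I_sq]
  subst hA hB hC hD
  ring

/-- For `q` not a root of unity, the `n`-dimensional representation
`R_n^{(i,+)}` of `U_q(so_3)` (with `q^{k-1/2} = s^(2k-1)`) satisfies the
defining relations (7) and (8) of `U_q(so_3)`. -/
theorem stmt_9 (q s : ℂ) (hq0 : q ≠ 0)
    (hroot : ∀ k : ℕ, 0 < k → q ^ k ≠ 1) (hs : s ^ 2 = q)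
    (n : ℕ) (hn : 1 ≤ n)
    (T1 T2 : Module.End ℂ (Fin n → ℂ))
    (h1 : ∀ k : ℤ, 1 ≤ k → k ≤ n →
      T1 (e n k) = (-((s ^ (2 * k - 1) + s ^ (1 - 2 * k)) / (q - q⁻¹))) • e n k)
    (h2a : T2 (e n 1) = (br q s (2 * n) / (s - s⁻¹)) • e n 1 +
      (Complex.I * br q s (2 * (n - 1)) / (s - s⁻¹)) • e n 2)
    (h2b : ∀ k : ℤ, 2 ≤ k → k ≤ n →
      T2 (e n k) =
        (Complex.I * br q s (2 * (n - k)) / (s ^ (2 * k - 1) - s ^ (1 - 2 * k)))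
          • e n (k + 1) +
        (Complex.I * br q s (2 * (n + k - 1)) / (s ^ (2 * k - 1) - s ^ (1 - 2 * k)))
          • e n (k - 1)) :
    T1 * T2 ^ 2 - (q + q⁻¹) • (T2 * T1 * T2) + T2 ^ 2 * T1 = -T1 ∧
    T2 * T1 ^ 2 - (q + q⁻¹) • (T1 * T2 * T1) + T1 ^ 2 * T2 = -T2 := by
  subst hs
  have hs0 : s ≠ 0 := by rintro rfl; simp at hq0
  have hodd : ∀ k : ℤ, (s ^ (2 * k - 1)) ^ 2 ≠ 1 := by
    intro k hk
    have hz : (s^2) ^ (2 * k - 1) = 1 := by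
      rw [← hk, ← zpow_natCast, ← zpow_natCast, ← zpow_mul, ← zpow_mul, mul_comm]
    have hne : 2 * k - 1 ≠ 0 := by omega
    apply hroot (2 * k - 1).natAbs (by omega)
    rcases Int.natAbs_eq (2 * k - 1) with h | h
    · rw [h, zpow_natCast] at hz; exact hz
    · rw [h, zpow_neg, zpow_natCast, inv_eq_one] at hz; exact hz
  have hd4 : s^4 - 1 ≠ 0 := by
    intro h; apply hroot 2 (by norm_num); linear_combination h
  have hd : s^2 - (s^2)⁻¹ ≠ 0 := sub_inv_ne _ hq0 (hroot 2 (by norm_num))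
  have hss : s - s⁻¹ ≠ 0 := sub_inv_ne _ hs0 (by have := hroot 1 (by norm_num); simpa using this)
  have hI : Complex.I * Complex.I = -1 := Complex.I_mul_I
  have L1 : ∀ k : ℤ, -1 ≤ k → T1 (fv n k) = lam (s^2) s k • fv n k := by
    have h1' : ∀ k : ℤ, 1 ≤ k → T1 (e n k) = lam (s^2) s k • e n k := by
      intro k hk
      by_cases hkn : k ≤ n
      · exact h1 k hk hkn
      · rw [e_big n k (by omega)]; simp
    intro k hk
    by_cases hk1 : 1 ≤ k
    · rw [fv_pos n k hk1, h1' k hk1]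
    · have : k = 0 ∨ k = -1 := by omega
      rcases this with rfl | rfl
      · rw [fv_zero, map_smul, h1' 1 (by norm_num), smul_comm]
        congr 1
        simp [lam, add_comm]
      · rw [fv_neg, map_smul, h1' 2 (by norm_num), smul_comm]
        congr 1
        norm_num [lam, add_comm]
  have L2 : ∀ k : ℤ, 0 ≤ k → k ≤ n →
      T2 (fv n k) = ca (s^2) s n k • fv n (k + 1) + cb (s^2) s n k • fv n (k - 1) := by
    intro k hk hkn
    have hc : k = 0 ∨ k = 1 ∨ 2 ≤ k := by omega
    rcases hc with rfl | rfl | hk2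
    · rw [fv_zero, map_smul, h2a]
      norm_num only
      rw [fv_neg, fv_pos n 1 le_rfl, smul_add, smul_smul, smul_smul, smul_smul]
      have hneg : s⁻¹ - s = -(s - s⁻¹) := by ring
      congr 2
      · rw [ca]
        norm_num only
        rw [zpow_neg_one, zpow_one, hneg, div_neg, mul_div_assoc, sub_zero]
        ring
      · rw [cb]
        norm_num only
        rw [zpow_neg_one, zpow_one, hneg, div_neg, add_zero]
        ring
    · rw [fv_pos n 1 le_rfl, h2a]
      norm_num only
      rw [fv_pos n 2 (by norm_num), fv_zero, smul_smul, add_comm]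
      congr 2
      · simp [ca]
      · simp [cb]
        linear_combination (br (s^2) s (2 * n) / (s - s⁻¹)) * hI
    · rw [fv_pos n k (by omega), fv_pos n (k+1) (by omega), fv_pos n (k-1) (by omega), h2b k hk2 hkn]
      rfl
  have hca : ca (s^2) s n n = 0 := by simp [ca, br]
  have L3 : ∀ k : ℤ, 1 ≤ k → k ≤ n → ca (s^2) s n k • T2 (fv n (k+1)) =
      ca (s^2) s n k • (ca (s^2) s n (k+1) • fv n (k + 2) + cb (s^2) s n (k+1) • fv n k) := by
    intro k hk hkn
    by_cases h : k = n
    · rw [h, hca]; simp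
    · rw [L2 (k+1) (by omega) (by omega)]
      rw [show k + 1 + 1 = k + 2 by ring, show k + 1 - 1 = k by ring]
  have hext : ∀ A B : Module.End ℂ (Fin n → ℂ),
      (∀ k : ℤ, 1 ≤ k → k ≤ n → A (fv n k) = B (fv n k)) → A = B := by
    intro A B h
    apply LinearMap.pi_ext'
    intro i
    apply LinearMap.ext_ring
    have := h (i + 1) (by omega) (by have := i.2; omega)
    rw [fv_pos n _ (by omega)] at this
    have he : e n ((i : ℤ) + 1) = Pi.single i 1 := by
      funext j
      simp [e, Pi.single_apply, Fin.ext_iff]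
    rw [he] at this
    simpa using this
  have hlin : ∀ k : ℤ, lam (s^2) s (k+1) - (s^2 + (s^2)⁻¹) * lam (s^2) s k
      + lam (s^2) s (k-1) = 0 := by
    intro k
    have := lam_lin s (s ^ (2 * (k - 1) - 1)) hs0 (zpow_ne_zero _ hs0) (s^2 - (s^2)⁻¹)
    rw [← x_succ s hs0, ← x_succ s hs0, ← lam_eq s hs0 _ _ rfl, ← lam_eq s hs0 _ _ rfl,
      ← lam_eq s hs0 _ _ rfl] at this
    simpa using this
  have hquad : ∀ k : ℤ, lam (s^2) s (k+1) ^ 2 - (s^2 + (s^2)⁻¹) * lam (s^2) s (k+1) * lam (s^2) s k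
      + lam (s^2) s k ^ 2 = -1 := by
    intro k
    have := lam_quad s (s ^ (2 * k - 1)) hs0 (zpow_ne_zero _ hs0) hd
    rw [← x_succ s hs0, ← lam_eq s hs0 _ _ rfl, ← lam_eq s hs0 _ _ rfl] at this
    exact this
  have hmain : ∀ k : ℤ,
      ca (s^2) s n k * cb (s^2) s n (k+1) *
        (2 * lam (s^2) s k - (s^2 + (s^2)⁻¹) * lam (s^2) s (k+1)) +
      cb (s^2) s n k * ca (s^2) s n (k-1) *
        (2 * lam (s^2) s k - (s^2 + (s^2)⁻¹) * lam (s^2) s (k-1)) = - lam (s^2) s k := by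
    intro k
    rw [ca_eq s hs0 k n _ _ rfl rfl, cb_eq s hs0 (k+1) n _ _ rfl rfl,
      cb_eq s hs0 k n _ _ rfl rfl, ca_eq s hs0 (k-1) n _ _ rfl rfl,
      lam_eq s hs0 k _ rfl, lam_eq s hs0 (k+1) _ rfl, lam_eq s hs0 (k-1) _ rfl,
      x_succ s hs0, x_pred s hs0]
    apply main_scal s _ _ hs0 (zpow_ne_zero _ hs0) (pow_ne_zero _ hs0) hd4
    · exact sub_ne_zero.2 (hodd k)
    · have := hodd (k+1)
      rw [x_succ s hs0] at this
      intro h; apply this; linear_combination h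
    · have := hodd (k-1)
      rw [x_pred s hs0] at this
      intro h; apply this
      rw [div_pow, div_eq_one_iff_eq (by simp [hs0])]
      linear_combination h
  constructor
  · apply hext
    intro k hk hkn
    have E1 := L2 k (by omega) hkn
    have E2 := L3 k hk hkn
    have E3 := L2 (k-1) (by omega) (by omega)
    rw [show k - 1 + 1 = k by ring, show k - 1 - 1 = k - 2 by ring] at E3
    have F0 := L1 k (by omega)
    have F1 := L1 (k+1) (by omega)
    have F2 := L1 (k+2) (by omega)
    have F3 := L1 (k-1) (by omega)
    have F4 := L1 (k-2) (by omega)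
    have G1 := hlin (k+1)
    have G2 := hlin (k-1)
    rw [show k + 1 + 1 = k + 2 by ring, show k + 1 - 1 = k by ring] at G1
    rw [show k - 1 + 1 = k by ring, show k - 1 - 1 = k - 2 by ring] at G2
    have G3 := hmain k
    have E12 : T2 (T2 (fv n k)) =
        ca (s^2) s n k • (ca (s^2) s n (k+1) • fv n (k + 2) + cb (s^2) s n (k+1) • fv n k) +
        cb (s^2) s n k • (ca (s^2) s n (k-1) • fv n k + cb (s^2) s n (k-1) • fv n (k-2)) := by
      rw [E1, map_add, map_smul, map_smul, E2, E3]
    have E121 : T2 (T1 (T2 (fv n k))) =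
        lam (s^2) s (k+1) • ca (s^2) s n k • (ca (s^2) s n (k+1) • fv n (k + 2) + cb (s^2) s n (k+1) • fv n k) +
        lam (s^2) s (k-1) • cb (s^2) s n k • (ca (s^2) s n (k-1) • fv n k + cb (s^2) s n (k-1) • fv n (k-2)) := by
      rw [E1, map_add, map_smul, map_smul, F1, F3, smul_comm _ (lam _ _ _), smul_comm _ (lam _ _ _),
        map_add, map_smul, map_smul, map_smul, map_smul, E2, E3]
    simp only [pow_two T2, LinearMap.add_apply, LinearMap.sub_apply, LinearMap.smul_apply,
      Module.End.mul_apply, LinearMap.neg_apply]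
    rw [E121, F0, map_smul, map_smul, E12]
    simp only [map_add, map_smul, F0, F2, F4]
    funext j
    simp only [Pi.add_apply, Pi.sub_apply, Pi.smul_apply, Pi.neg_apply, smul_eq_mul]
    linear_combination (ca (s^2) s n k * ca (s^2) s n (k+1)) * fv n (k+2) j * G1
      + (cb (s^2) s n k * cb (s^2) s n (k-1)) * fv n (k-2) j * G2 + fv n k j * G3
  · apply hext
    intro k hk hkn
    have E1 := L2 k (by omega) hkn
    have F0 := L1 k (by omega)
    have F1 := L1 (k+1) (by omega)
    have F3 := L1 (k-1) (by omega)
    have G1 := hquad k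
    have G2 := hquad (k-1)
    rw [show k - 1 + 1 = k by ring] at G2
    simp only [pow_two T1, LinearMap.add_apply, LinearMap.sub_apply, LinearMap.smul_apply,
      Module.End.mul_apply, LinearMap.neg_apply]
    simp only [map_add, map_smul, F0, F1, F3, E1]
    funext j
    simp only [Pi.add_apply, Pi.sub_apply, Pi.smul_apply, Pi.neg_apply, smul_eq_mul]
    linear_combination ca (s^2) s n k * fv n (k+1) j * G1
      + cb (s^2) s n k * fv n (k-1) j * G2
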